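/- Let c > 0 with 1/c an integer, let ℓ, s, t > 0 be integers, let d > 0, and let ε > 0 satisfy (2 + 1/c)^{(t+1)(ℓ+t)}·ε < d. Let G be an ε-sparse (ε|G|^{1−c}, ε|G|)-coherent graph, and for i = 1, 2 let L_i be a levelling in G of height s (for i=1) and t (for i=2), with heart H_i, apex a_i, and base B_i, such that: V(L_1) ∩ V(L_2) = {a_1} ∩ {a_2}; V(L_2)∖{a_2} is anticomplete to H_1, and if a_1 ≠ a_2 then a_2 is anticomplete to H_1; and |B_i| ≥ d|G| for i = 1, 2. Then there is an induced path (or induced cycle, if a_1 = a_2) of length ℓ + s + t between a_1 and a_2 with vertex set contained in H_1 ∪ B_1 ∪ H_2 ∪ B_2. -/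

import Mathlib

/-- (L 0, ..., L k) is a levelling in G: the sets are pairwise disjoint, |L 0| = 1,
each L (i-1) covers L i, and L 0 ∪ ... ∪ L (i-2) is anticomplete to L i. -/
def IsLevelling {V : Type} (G : SimpleGraph V) (L : ℕ → Finset V) (k : ℕ) : Prop :=
  1 ≤ k ∧ (L 0).card = 1 ∧
  (∀ i j, i < j → j ≤ k → Disjoint (L i) (L j)) ∧
  (∀ i, 1 ≤ i → i ≤ k → ∀ v ∈ L i, ∃ u ∈ L (i - 1), G.Adj u v) ∧
  (∀ i, 2 ≤ i → i ≤ k → ∀ j, j ≤ i - 2 → ∀ u ∈ L j, ∀ v ∈ L i, ¬ G.Adj u v)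

/-- heavy subset of prescribed size -/
lemma exists_heavy_subset {V : Type} (w : V → ℕ) (m : ℕ) :
    ∀ (N : ℕ) (E : Finset V), E.card = N → m ≤ N →
      ∃ E' ⊆ E, E'.card = m ∧ m * ∑ e ∈ E, w e ≤ N * ∑ e ∈ E', w e := by
  classical
  intro N
  induction N with
  | zero =>
    intro E hE hm
    refine ⟨E, Finset.Subset.refl _, by omega, ?_⟩
    have : m = 0 := by omega
    simp [this]
  | succ N ih =>
    intro E hE hm
    rcases Nat.lt_or_ge N m with h | h
    · have hmN : m = N + 1 := by omega
      exact ⟨E, Finset.Subset.refl _, by omega, by rw [hmN]⟩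
    · have hne : E.Nonempty := by
        rw [← Finset.card_pos]; omega
      obtain ⟨e, he, hmin⟩ := Finset.exists_min_image E w hne
      obtain ⟨E', hE', hc, hs⟩ := ih (E.erase e) (by rw [Finset.card_erase_of_mem he]; omega) h
      refine ⟨E', hE'.trans (Finset.erase_subset _ _), hc, ?_⟩
      rcases Nat.eq_zero_or_pos m with h0 | h0
      · simp [h0]
      have hN : 0 < N := by omega
      have h1 : (N + 1) * w e ≤ ∑ x ∈ E, w x := by
        rw [← hE]
        have := Finset.card_nsmul_le_sum E w (w e) hmin
        simpa using this
      have h2 : w e + ∑ x ∈ E.erase e, w x = ∑ x ∈ E, w x := Finset.add_sum_erase E w he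
      have h3 : N * (m * ∑ x ∈ E, w x) ≤ N * ((N + 1) * ∑ x ∈ E', w x) := by
        rw [← h2] at h1 ⊢
        set A := ∑ x ∈ E.erase e, w x
        set B := ∑ x ∈ E', w x
        have h4 : N * w e ≤ A := by nlinarith
        calc N * (m * (w e + A)) = m * (N * w e + N * A) := by ring
          _ ≤ m * (A + N * A) := by gcongr
          _ = (N + 1) * (m * A) := by ring
          _ ≤ (N + 1) * (N * B) := by gcongr
          _ = N * ((N + 1) * B) := by ring
      exact Nat.le_of_mul_le_mul_left h3 hN

/-- forward step relation -/
def stepRel {V : Type} (G : SimpleGraph V) (idx : V → ℕ) (F : V → Prop) (v w : V) : Prop :=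
  G.Adj v w ∧ F w ∧ idx v < idx w

lemma expand_one {V : Type} (G : SimpleGraph V) (idx : V → ℕ) (F : V → Prop)
    (η u : ℝ) (hη : 0 < η) (hu : 1 ≤ u)
    (hco : ∀ A B : Finset V, Disjoint A B → (∀ a ∈ A, ∀ b ∈ B, ¬ G.Adj a b) →
      η / u ≤ (A.card : ℝ) → (B.card : ℝ) < η)
    (b m : ℕ) (hm : 1 ≤ m) (E R S : Finset V)
    (hR : ∀ r ∈ R, idx r = b ∧ ∃ e ∈ E, Relation.ReflTransGen (stepRel G idx F) e r)
    (hRc : 2 * η ≤ (R.card : ℝ)) (hE : (E.card : ℝ) ≤ 2 * u * m)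
    (hS : ∀ s ∈ S, idx s = b + 1 ∧ F s) :
    ∃ E' ⊆ E, E'.card ≤ m ∧ ∃ R' ⊆ S, (S.card : ℝ) - η ≤ R'.card ∧
      ∀ r ∈ R', ∃ e ∈ E', Relation.TransGen (stepRel G idx F) e r := by
  classical
  have hu0 : 0 < u := by linarith
  have key : ∃ E' ⊆ E, E'.card ≤ m ∧ ∃ A ⊆ R, η / u ≤ (A.card : ℝ) ∧
      ∀ r ∈ A, ∃ e ∈ E', Relation.ReflTransGen (stepRel G idx F) e r := by
    rcases Nat.lt_or_ge m E.card with h | h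
    · have hR2 : ∀ r ∈ R, ∃ e ∈ E, Relation.ReflTransGen (stepRel G idx F) e r :=
        fun r hr => (hR r hr).2
      choose! g hgE hg using hR2
      obtain ⟨E', hE', hc, hs⟩ := exists_heavy_subset
        (fun e => (R.filter (fun r => g r = e)).card) m E.card E rfl h.le
      have e1 : ∑ e ∈ E, (R.filter (fun r => g r = e)).card = R.card :=
        (Finset.card_eq_sum_card_fiberwise (f := g) (fun r hr => hgE r hr)).symm
      have e2 : ∑ e ∈ E', (R.filter (fun r => g r = e)).card
          = (R.filter (fun r => g r ∈ E')).card := by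
        rw [Finset.card_eq_sum_card_fiberwise (f := g) (t := E')
          (fun r hr => by simpa using (Finset.mem_filter.1 hr).2)]
        refine Finset.sum_congr rfl fun e he => ?_
        congr 1
        ext r
        simp only [Finset.mem_filter]
        constructor
        · rintro ⟨h1, h2⟩; exact ⟨⟨h1, by rw [h2]; exact he⟩, h2⟩
        · rintro ⟨⟨h1, _⟩, h2⟩; exact ⟨h1, h2⟩
      simp only [e1, e2] at hs
      refine ⟨E', hE', hc.le, R.filter (fun r => g r ∈ E'), Finset.filter_subset _ _, ?_, ?_⟩
      · set a := (R.filter (fun r => g r ∈ E')).card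
        have hs' : (m : ℝ) * R.card ≤ E.card * a := by exact_mod_cast hs
        have hm' : (0 : ℝ) < m := by exact_mod_cast hm
        have h1 : (m : ℝ) * (2 * η) ≤ m * (2 * u * a) := by
          calc (m : ℝ) * (2 * η) ≤ m * R.card := by gcongr
            _ ≤ E.card * a := hs'
            _ ≤ 2 * u * m * a := by gcongr
            _ = m * (2 * u * a) := by ring
        have h2 := le_of_mul_le_mul_left h1 hm'
        rw [div_le_iff₀ hu0]
        nlinarith
      · intro r hr
        rw [Finset.mem_filter] at hr
        exact ⟨g r, hr.2, hg r hr.1⟩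
    · refine ⟨E, Finset.Subset.refl _, h, R, Finset.Subset.refl _, ?_, fun r hr => (hR r hr).2⟩
      have : η / u ≤ η := div_le_self hη.le hu
      linarith
  obtain ⟨E', hE', hc, A, hAR, hA, hAr⟩ := key
  refine ⟨E', hE', hc, S.filter (fun s => ∃ a ∈ A, G.Adj a s), Finset.filter_subset _ _, ?_, ?_⟩
  · have hB := hco A (S.filter (fun s => ¬ ∃ a ∈ A, G.Adj a s)) (by
      rw [Finset.disjoint_left]
      intro a ha hs
      have h1 := (hR a (hAR ha)).1
      have h2 := (hS a (Finset.mem_filter.1 hs).1).1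
      omega) (by
      intro a ha s hs hadj
      exact (Finset.mem_filter.1 hs).2 ⟨a, ha, hadj⟩) hA
    have hsum := Finset.card_filter_add_card_filter_not (s := S) (fun s => ∃ a ∈ A, G.Adj a s)
    have hsum' : ((S.filter (fun s => ∃ a ∈ A, G.Adj a s)).card : ℝ)
      + (S.filter (fun s => ¬ ∃ a ∈ A, G.Adj a s)).card = S.card := by exact_mod_cast hsum
    linarith
  · intro r hr
    obtain ⟨hrS, a, ha, hadj⟩ := Finset.mem_filter.1 hr
    obtain ⟨e, he, hre⟩ := hAr a ha
    refine ⟨e, he, Relation.TransGen.tail' hre ⟨hadj, (hS r hrS).2, ?_⟩⟩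
    rw [(hR a (hAR ha)).1, (hS r hrS).1]; omega

lemma expand_many {V : Type} (G : SimpleGraph V) (idx : V → ℕ) (F : V → Prop)
    (η u K : ℝ) (hη : 0 < η) (hu : 1 ≤ u) (hK : 3 * η ≤ K)
    (hco : ∀ A B : Finset V, Disjoint A B → (∀ a ∈ A, ∀ b ∈ B, ¬ G.Adj a b) →
      η / u ≤ (A.card : ℝ) → (B.card : ℝ) < η) (k : ℕ) :
    ∀ (b : ℕ) (E R : Finset V),
    (∀ r ∈ R, idx r = b ∧ ∃ e ∈ E, Relation.ReflTransGen (stepRel G idx F) e r) →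
    2 * η ≤ (R.card : ℝ) → E.card ≤ ⌈u ^ (k + 1)⌉₊ →
    (∀ b', b < b' → b' ≤ b + (k + 1) →
      ∃ S : Finset V, K ≤ S.card ∧ ∀ s ∈ S, idx s = b' ∧ F s) →
    ∃ e ∈ E, ∃ R' : Finset V, K - η ≤ R'.card ∧
      ∀ r ∈ R', idx r = b + (k + 1) ∧ Relation.TransGen (stepRel G idx F) e r := by
  induction k with
  | zero =>
    intro b E R hR hRc hE hblk
    obtain ⟨S, hSK, hS⟩ := hblk (b + 1) (by omega) (by omega)
    have hE' : (E.card : ℝ) ≤ 2 * u * (1 : ℕ) := by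
      have h1 : (E.card : ℝ) ≤ (⌈u ^ (0 + 1)⌉₊ : ℝ) := by exact_mod_cast hE
      have h2 := Nat.ceil_lt_add_one (a := u ^ (0 + 1)) (by positivity)
      simp only [zero_add, pow_one] at h1 h2
      push_cast
      linarith
    obtain ⟨E', hE'E, hc, R', hR'S, hR'c, hR'⟩ :=
      expand_one G idx F η u hη hu hco b 1 le_rfl E R S hR hRc hE' hS
    have hpos : (0 : ℝ) < R'.card := by linarith
    have hpos' : 0 < R'.card := by exact_mod_cast hpos
    obtain ⟨r0, hr0⟩ := Finset.card_pos.1 hpos'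
    obtain ⟨e, he, _⟩ := hR' r0 hr0
    refine ⟨e, hE'E he, R', by linarith, fun r hr => ⟨by simpa using (hS r (hR'S hr)).1, ?_⟩⟩
    obtain ⟨e', he', h⟩ := hR' r hr
    rwa [Finset.card_le_one.1 hc e he e' he']
  | succ k ih =>
    intro b E R hR hRc hE hblk
    obtain ⟨S, hSK, hS⟩ := hblk (b + 1) (by omega) (by omega)
    have hm : u ^ (k + 1) ≤ (⌈u ^ (k + 1)⌉₊ : ℝ) := Nat.le_ceil _
    have hu1 : 1 ≤ u ^ (k + 1) := one_le_pow₀ hu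
    have hu2 : 1 ≤ u ^ (k + 1 + 1) := one_le_pow₀ hu
    have hE' : (E.card : ℝ) ≤ 2 * u * (⌈u ^ (k + 1)⌉₊ : ℕ) := by
      have h1 : (E.card : ℝ) ≤ (⌈u ^ (k + 1 + 1)⌉₊ : ℝ) := by exact_mod_cast hE
      have h2 := Nat.ceil_lt_add_one (a := u ^ (k + 1 + 1)) (by positivity)
      have h3 : 2 * u * u ^ (k + 1) ≤ 2 * u * (⌈u ^ (k + 1)⌉₊ : ℝ) := by gcongr
      have h4 : u ^ (k + 1 + 1) = u * u ^ (k + 1) := by ring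
      nlinarith
    obtain ⟨E', hE'E, hc, R', hR'S, hR'c, hR'⟩ :=
      expand_one G idx F η u hη hu hco b ⌈u ^ (k + 1)⌉₊
        (by rw [Nat.one_le_ceil_iff]; linarith) E R S hR hRc hE' hS
    obtain ⟨e, he, R'', h1, h2⟩ := ih (b + 1) E' R'
      (fun r hr => ⟨(hS r (hR'S hr)).1, by
        obtain ⟨e, he, h⟩ := hR' r hr
        exact ⟨e, he, h.to_reflTransGen⟩⟩) (by linarith) hc
      (fun b' h1 h2 => hblk b' (by omega) (by omega))
    exact ⟨e, hE'E he, R'', h1, fun r hr => ⟨by rw [(h2 r hr).1]; omega, (h2 r hr).2⟩⟩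

lemma step_restrict {V : Type} (G : SimpleGraph V) (idx : V → ℕ) (F : V → Prop) (d r : V)
    (h : Relation.TransGen (stepRel G idx F) d r) (hr : ¬ G.Adj d r) :
    ∃ e, G.Adj d e ∧ F e ∧ idx d < idx e ∧
      Relation.ReflTransGen (stepRel G idx (fun v => F v ∧ ¬ G.Adj d v)) e r := by
  induction h with
  | single h => exact absurd h.1 hr
  | @tail r' r h1 h2 ih =>
    by_cases hd : G.Adj d r'
    · have hF : F r' ∧ idx d < idx r' := by
        clear ih hr h2
        induction h1 with
        | single h => exact ⟨h.2.1, h.2.2⟩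
        | tail h3 h4 ih' =>
          refine ⟨h4.2.1, ?_⟩
          have : ∀ z, Relation.TransGen (stepRel G idx F) d z → idx d < idx z := by
            intro z hz
            induction hz with
            | single h => exact h.2.2
            | tail _ h5 ih5 => exact ih5.trans h5.2.2
          exact (this _ h3).trans h4.2.2
      exact ⟨r', hd, hF.1, hF.2, Relation.ReflTransGen.single ⟨h2.1, ⟨h2.2.1, hr⟩, h2.2.2⟩⟩
    · obtain ⟨e, he1, he2, he3, he4⟩ := ih hd
      exact ⟨e, he1, he2, he3, he4.tail ⟨h2.1, ⟨h2.2.1, hr⟩, h2.2.2⟩⟩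

lemma grow_path {V : Type} [Fintype V] (G : SimpleGraph V) (idx : V → ℕ)
    (η u : ℝ) (hη : 0 < η) (hu : 1 ≤ u) (k : ℕ)
    (hn : (Fintype.card V : ℝ) ≤ u ^ (k + 1))
    (hsp : ∀ (v : V) (A : Finset V), (∀ a ∈ A, G.Adj v a) → (A.card : ℝ) ≤ η)
    (hco : ∀ A B : Finset V, Disjoint A B → (∀ a ∈ A, ∀ b ∈ B, ¬ G.Adj a b) →
      η / u ≤ (A.card : ℝ) → (B.card : ℝ) < η) (q : ℕ) :
    ∀ (F : V → Prop) (b : ℕ) (E R : Finset V),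
    (∀ r ∈ R, idx r = b ∧ ∃ e ∈ E, Relation.ReflTransGen (stepRel G idx F) e r) →
    2 * η ≤ (R.card : ℝ) →
    (∀ b', b < b' → b' ≤ b + q * (k + 1) →
      ∃ S : Finset V, (q + 3) * η ≤ S.card ∧ ∀ s ∈ S, idx s = b' ∧ F s) →
    ∃ p : ℕ → V, p 0 ∈ E ∧ (∀ i, 1 ≤ i → i ≤ q → F (p i)) ∧
      (∀ i, i < q → G.Adj (p i) (p (i + 1))) ∧
      (∀ i j, i + 2 ≤ j → j ≤ q → ¬ G.Adj (p i) (p j)) ∧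
      (∀ i j, i < j → j ≤ q → idx (p i) < idx (p j)) := by
  classical
  induction q with
  | zero =>
    intro F b E R hR hRc _
    have hpos : (0 : ℝ) < R.card := by linarith
    have hpos' : 0 < R.card := by exact_mod_cast hpos
    obtain ⟨r0, hr0⟩ := Finset.card_pos.1 hpos'
    obtain ⟨e, he, _⟩ := (hR r0 hr0).2
    exact ⟨fun _ => e, he, by intros; omega, by intros; omega, by intros; omega,
      by intros; omega⟩
  | succ q ih =>
    intro F b E R hR hRc hblk
    have hremove : ∀ (d : V) (S : Finset V),
        (S.card : ℝ) - η ≤ (S.filter (fun s => ¬ G.Adj d s)).card := by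
      intro d S
      have hsum := Finset.card_filter_add_card_filter_not (s := S) (fun s => G.Adj d s)
      have hsum' : ((S.filter (fun s => G.Adj d s)).card : ℝ)
        + (S.filter (fun s => ¬ G.Adj d s)).card = S.card := by exact_mod_cast hsum
      have := hsp d (S.filter (fun s => G.Adj d s)) (fun a ha => (Finset.mem_filter.1 ha).2)
      linarith
    have hq0 : (0 : ℝ) ≤ q := Nat.cast_nonneg q
    have hqe : 0 ≤ q * η := by positivity
    obtain ⟨d, hd, R', hR'c, hR'⟩ := expand_many G idx F η u ((q + 4) * η) hη hu
      (by nlinarith) hco k b E R hR hRc (by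
        have h1 : (E.card : ℝ) ≤ Fintype.card V := by exact_mod_cast Finset.card_le_univ E
        have h2 := Nat.le_ceil (u ^ (k + 1))
        have h3 : (E.card : ℝ) ≤ (⌈u ^ (k + 1)⌉₊ : ℝ) := by linarith
        exact_mod_cast h3) (fun b' h1 h2 => by
        obtain ⟨S, hS, hS'⟩ := hblk b' h1 (by
          have : (q + 1) * (k + 1) = q * (k + 1) + (k + 1) := by ring
          omega)
        refine ⟨S, ?_, hS'⟩
        push_cast at hS
        linarith)
    obtain ⟨p, hp0, hpF, hpa, hpn, hpi⟩ := ih (fun v => F v ∧ ¬ G.Adj d v) (b + (k + 1))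
      (Finset.univ.filter (fun e => G.Adj d e ∧ F e ∧ idx d < idx e))
      (R'.filter (fun s => ¬ G.Adj d s))
      (by
        intro r hr
        rw [Finset.mem_filter] at hr
        obtain ⟨e, h1, h2, h3, h4⟩ := step_restrict G idx F d r (hR' r hr.1).2 hr.2
        exact ⟨(hR' r hr.1).1, e, by simp [h1, h2, h3], h4⟩)
      (by have := hremove d R'; linarith)
      (by
        intro b' h1 h2
        obtain ⟨S, hS, hS'⟩ := hblk b' (by omega) (by
          have : (q + 1) * (k + 1) = q * (k + 1) + (k + 1) := by ring
          omega)
        refine ⟨S.filter (fun s => ¬ G.Adj d s), ?_, ?_⟩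
        · have := hremove d S
          push_cast at hS
          linarith
        · intro s hs
          rw [Finset.mem_filter] at hs
          exact ⟨(hS' s hs.1).1, (hS' s hs.1).2, hs.2⟩)
    simp only [Finset.mem_filter, Finset.mem_univ, true_and] at hp0
    refine ⟨fun i => if i = 0 then d else p (i - 1), by simpa using hd, ?_, ?_, ?_, ?_⟩
    · intro i h1 h2
      obtain ⟨i, rfl⟩ : ∃ i', i = i' + 1 := ⟨i - 1, by omega⟩
      simp only [Nat.add_eq_zero_iff, one_ne_zero, and_false, if_false, Nat.add_sub_cancel]
      rcases Nat.eq_zero_or_pos i with h | h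
      · rw [h]; exact hp0.2.1
      · exact (hpF i h (by omega)).1
    · intro i hi
      rcases Nat.eq_zero_or_pos i with h | h
      · simp only [h, if_true, zero_add, one_ne_zero, if_false]; exact hp0.1
      · obtain ⟨i, rfl⟩ : ∃ i', i = i' + 1 := ⟨i - 1, by omega⟩
        simpa using hpa i (by omega)
    · intro i j hij hj
      obtain ⟨j, rfl⟩ : ∃ j', j = j' + 1 := ⟨j - 1, by omega⟩
      rcases Nat.eq_zero_or_pos i with h | h
      · simpa [h] using (hpF j (by omega) (by omega)).2
      · obtain ⟨i, rfl⟩ : ∃ i', i = i' + 1 := ⟨i - 1, by omega⟩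
        simpa using hpn i j (by omega) (by omega)
    · intro i j hij hj
      obtain ⟨j, rfl⟩ : ∃ j', j = j' + 1 := ⟨j - 1, by omega⟩
      have hdj : idx d < idx (p j) := by
        rcases Nat.eq_zero_or_pos j with h | h
        · rw [h]; exact hp0.2.2
        · exact hp0.2.2.trans (hpi 0 j h (by omega))
      rcases Nat.eq_zero_or_pos i with h | h
      · simpa [h] using hdj
      · obtain ⟨i, rfl⟩ : ∃ i', i = i' + 1 := ⟨i - 1, by omega⟩
        simpa using hpi i j (by omega) (by omega)

lemma exists_blocks {V : Type} (G : SimpleGraph V) (X : Finset V)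
    (η T : ℝ) (hη : 0 < η) (hT : 0 < T)
    (hsp : ∀ (v : V) (A : Finset V), (∀ a ∈ A, G.Adj v a) → (A.card : ℝ) ≤ η) (N : ℕ) :
    ∀ D : Finset V, (∀ d ∈ D, ∃ x ∈ X, G.Adj x d) → N * (T + η) ≤ (D.card : ℝ) →
    ∃ idx : V → ℕ, (∀ v, idx v ≤ N) ∧ (∀ v, idx v ≠ 0 → v ∈ D) ∧
      (∀ i, 1 ≤ i → i ≤ N → ∃ S : Finset V, T ≤ S.card ∧ ∀ s ∈ S, idx s = i) ∧
      (∀ v, idx v ≠ 0 → ∃ x ∈ X, G.Adj x v ∧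
        ∀ v', idx v' ≠ 0 → idx v' < idx v → ¬ G.Adj x v') := by
  classical
  induction N with
  | zero =>
    intro D _ _
    exact ⟨fun _ => 0, by simp, by simp, by intros; omega, by simp⟩
  | succ N ih =>
    intro D hD hDc
    have hne : ∃ X' ⊆ X, T ≤ (D.filter (fun d => ∃ x ∈ X', G.Adj x d)).card := by
      refine ⟨X, Finset.Subset.refl _, ?_⟩
      rw [Finset.filter_true_of_mem hD]
      push_cast at hDc
      have : (0 : ℝ) ≤ N * (T + η) := by positivity
      linarith
    obtain ⟨X', hX'⟩ : ∃ X' : Finset V, (X' ⊆ X ∧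
        T ≤ (D.filter (fun d => ∃ x ∈ X', G.Adj x d)).card) ∧
        ∀ Y, (Y ⊆ X ∧ T ≤ (D.filter (fun d => ∃ x ∈ Y, G.Adj x d)).card) →
          X'.card ≤ Y.card := by
      have := Finset.exists_min_image (X.powerset.filter
        (fun X' => T ≤ (D.filter (fun d => ∃ x ∈ X', G.Adj x d)).card)) Finset.card (by
          obtain ⟨X', h1, h2⟩ := hne
          exact ⟨X', by simp only [Finset.mem_filter, Finset.mem_powerset]; exact ⟨h1, h2⟩⟩)
      obtain ⟨X', h1, h2⟩ := this
      simp only [Finset.mem_filter, Finset.mem_powerset] at h1 h2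
      exact ⟨X', h1, h2⟩
    obtain ⟨⟨hX'X, hX'T⟩, hmin⟩ := hX'
    set W := D.filter (fun d => ∃ x ∈ X', G.Adj x d) with hW
    have hWc : (W.card : ℝ) ≤ T + η := by
      have hXne : X'.Nonempty := by
        by_contra hno
        rw [Finset.not_nonempty_iff_eq_empty] at hno
        have : W.card = 0 := by simp [hW, hno]
        rw [this] at hX'T
        simp at hX'T
        linarith
      obtain ⟨x, hx⟩ := hXne
      have h1 : ((D.filter (fun d => ∃ z ∈ X'.erase x, G.Adj z d)).card : ℝ) < T := by
        by_contra hge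
        have := hmin (X'.erase x) ⟨(Finset.erase_subset _ _).trans hX'X, not_lt.1 hge⟩
        rw [Finset.card_erase_of_mem hx] at this
        have := Finset.card_pos.2 ⟨x, hx⟩
        omega
      have h2 := hsp x (D.filter (fun d => G.Adj x d)) (fun a ha => (Finset.mem_filter.1 ha).2)
      have h3 : W ⊆ D.filter (fun d => ∃ z ∈ X'.erase x, G.Adj z d)
          ∪ D.filter (fun d => G.Adj x d) := by
        intro d hd
        obtain ⟨hdD, z, hz, hzd⟩ := Finset.mem_filter.1 hd
        rw [Finset.mem_union, Finset.mem_filter, Finset.mem_filter]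
        by_cases hzx : z = x
        · right; exact ⟨hdD, hzx ▸ hzd⟩
        · left; exact ⟨hdD, z, Finset.mem_erase.2 ⟨hzx, hz⟩, hzd⟩
      have h4 := (Finset.card_le_card h3).trans (Finset.card_union_le _ _)
      have h5 : (W.card : ℝ) ≤ (D.filter (fun d => ∃ z ∈ X'.erase x, G.Adj z d)).card
          + (D.filter (fun d => G.Adj x d)).card := by exact_mod_cast h4
      linarith
    have hsum := Finset.card_filter_add_card_filter_not (s := D) (fun d => ∃ x ∈ X', G.Adj x d)
    have hsum' : (W.card : ℝ)
      + (D.filter (fun d => ¬ ∃ x ∈ X', G.Adj x d)).card = D.card := by exact_mod_cast hsum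
    obtain ⟨idx, h1, h2, h3, h4⟩ := ih (D.filter (fun d => ¬ ∃ x ∈ X', G.Adj x d))
      (fun d hd => hD d (Finset.mem_filter.1 hd).1) (by push_cast at hDc; linarith)
    have hWidx : ∀ v, idx v ≠ 0 → v ∉ W := by
      intro v hv hvW
      exact (Finset.mem_filter.1 (h2 v hv)).2 (Finset.mem_filter.1 hvW).2
    refine ⟨fun v => if v ∈ W then N + 1 else idx v, ?_, ?_, ?_, ?_⟩
    · intro v; have := h1 v
      by_cases hv : v ∈ W
      · simp [hv]
      · simp only [hv, if_false]; omega
    · intro v hv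
      by_cases hvW : v ∈ W
      · exact (Finset.mem_filter.1 hvW).1
      · simp only [hvW, if_false] at hv
        exact (Finset.mem_filter.1 (h2 v hv)).1
    · intro i hi hiN
      rcases Nat.lt_or_ge N i with h | h
      · refine ⟨W, hX'T, fun s hs => ?_⟩
        simp only [hs, if_true]; omega
      · obtain ⟨S, hS, hS'⟩ := h3 i hi h
        refine ⟨S, hS, fun s hs => ?_⟩
        have : s ∉ W := hWidx s (by rw [hS' s hs]; omega)
        simp only [this, if_false]; exact hS' s hs
    · intro v hv
      by_cases hvW : v ∈ W
      · obtain ⟨_, x, hx, hxv⟩ := Finset.mem_filter.1 hvW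
        refine ⟨x, hX'X hx, hxv, fun v' hv' hlt hadj => ?_⟩
        by_cases hv'W : v' ∈ W
        · simp [hvW, hv'W] at hlt
        · simp only [hv'W, if_false] at hv'
          exact (Finset.mem_filter.1 (h2 v' hv')).2 ⟨x, hx, hadj⟩
      · simp only [hvW, if_false] at hv
        obtain ⟨x, hx, hxv, hx2⟩ := h4 v hv
        refine ⟨x, hx, hxv, fun v' hv' hlt => ?_⟩
        by_cases hv'W : v' ∈ W
        · simp only [hvW, hv'W, if_true, if_false] at hlt
          have := h1 v
          omega
        · simp only [hvW, hv'W, if_false] at hlt hv'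
          exact hx2 v' hv' hlt

lemma walk_of_fun {V : Type} (G : SimpleGraph V) (f : ℕ → V) (n : ℕ)
    (h : ∀ i, i < n → G.Adj (f i) (f (i + 1))) :
    ∃ p : G.Walk (f 0) (f n), p.length = n ∧ p.support = (List.range (n + 1)).map f ∧
      ∀ i, i < n → s(f i, f (i + 1)) ∈ p.edges := by
  induction n with
  | zero => exact ⟨SimpleGraph.Walk.nil, rfl, by simp, by intros; omega⟩
  | succ n ih =>
    obtain ⟨p, h1, h2, h3⟩ := ih (fun i hi => h i (by omega))
    refine ⟨p.concat (h n (by omega)), ?_, ?_, ?_⟩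
    · rw [SimpleGraph.Walk.length_concat, h1]
    · rw [SimpleGraph.Walk.support_concat, h2, List.range_succ (n := n + 1)]
      simp
    · intro i hi
      rw [SimpleGraph.Walk.edges_concat]
      rcases Nat.lt_or_ge i n with hin | hin
      · simp [h3 i hin]
      · have : i = n := by omega
        subst this
        simp

lemma induced_walk_of_fun {V : Type} (G : SimpleGraph V) (f : ℕ → V) (n : ℕ)
    (h : ∀ i, i < n → G.Adj (f i) (f (i + 1)))
    (hinj : ∀ i j, i < j → j ≤ n → f i ≠ f j)
    (hind : ∀ i j, i + 2 ≤ j → j ≤ n → ¬ G.Adj (f i) (f j)) :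
    ∃ p : G.Walk (f 0) (f n), p.length = n ∧ p.IsPath ∧
      (∀ x ∈ p.support, ∃ i ≤ n, f i = x) ∧
      (∀ x ∈ p.support, ∀ y ∈ p.support, G.Adj x y → s(x, y) ∈ p.edges) := by
  obtain ⟨p, h1, h2, h3⟩ := walk_of_fun G f n h
  have hs : ∀ x ∈ p.support, ∃ i ≤ n, f i = x := by
    intro x hx
    rw [h2, List.mem_map] at hx
    obtain ⟨i, hi, rfl⟩ := hx
    exact ⟨i, by rw [List.mem_range] at hi; omega, rfl⟩
  refine ⟨p, h1, ?_, hs, ?_⟩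
  · rw [SimpleGraph.Walk.isPath_def, h2]
    refine List.Nodup.map_on ?_ List.nodup_range
    intro i hi j hj hij
    rw [List.mem_range] at hi hj
    by_contra hne
    rcases Nat.lt_or_gt_of_ne hne with hlt | hlt
    · exact hinj i j hlt (by omega) hij
    · exact hinj j i hlt (by omega) hij.symm
  · intro x hx y hy hadj
    obtain ⟨i, hi, rfl⟩ := hs x hx
    obtain ⟨j, hj, rfl⟩ := hs y hy
    rcases Nat.lt_trichotomy i j with hlt | heq | hlt
    · have : j = i + 1 := by
        by_contra hne
        exact hind i j (by omega) hj hadj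
      subst this
      exact h3 i (by omega)
    · subst heq; exact absurd hadj (G.irrefl)
    · have : i = j + 1 := by
        by_contra hne
        exact hind j i (by omega) hi hadj.symm
      subst this
      rw [Sym2.eq_swap]
      exact h3 j (by omega)

lemma level_path {V : Type} (G : SimpleGraph V) (L : ℕ → Finset V) (k : ℕ)
    (hL : IsLevelling G L k) (i : ℕ) :
    i ≤ k → ∀ v ∈ L i, ∃ l : ℕ → V, l i = v ∧ (∀ j, j ≤ i → l j ∈ L j) ∧
      (∀ j, j < i → G.Adj (l j) (l (j + 1))) := by
  induction i with
  | zero =>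
    intro _ v hv
    exact ⟨fun _ => v, rfl, by intro j hj; rw [Nat.le_zero.1 hj]; exact hv, by intros; omega⟩
  | succ i ih =>
    intro hi v hv
    obtain ⟨u, hu, huv⟩ := hL.2.2.2.1 (i + 1) (by omega) hi v hv
    obtain ⟨l, h1, h2, h3⟩ := ih (by omega) u hu
    refine ⟨fun j => if j ≤ i then l j else v, by simp, ?_, ?_⟩
    · intro j hj
      rcases Nat.lt_or_ge i j with h | h
      · have : j = i + 1 := by omega
        subst this; simpa using hv
      · simpa [h] using h2 j h
    · intro j hj
      rcases Nat.lt_or_ge j i with h | h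
      · have e1 : j ≤ i := by omega
        have e2 : j + 1 ≤ i := by omega
        simpa [e1, e2] using h3 j h
      · have : j = i := by omega
        subst this
        simpa [h1] using huv

lemma assemble {V : Type} (G : SimpleGraph V) (s t j q : ℕ) (L M : ℕ → Finset V)
    (hL : IsLevelling G L s) (hM : IsLevelling G M t) (hs : 0 < s) (hjt : j ≤ t) (hq : 1 ≤ q)
    (hdisj : ∀ i i', i ≤ s → i' ≤ t → Disjoint (L i) (M i'))
    (hanti : ∀ i i', i < s → i' ≤ t → ∀ x ∈ L i, ∀ y ∈ M i', ¬ G.Adj x y)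
    (D : Finset V) (hD : D ⊆ L s)
    (hDM : ∀ i, i < j → ∀ x ∈ D, ∀ y ∈ M i, ¬ G.Adj x y)
    (p : ℕ → V) (hp0 : p 0 ∈ M j) (hpD : ∀ i, 1 ≤ i → i ≤ q → p i ∈ D)
    (hpa : ∀ i, i < q → G.Adj (p i) (p (i + 1)))
    (hpn : ∀ i i', i + 2 ≤ i' → i' ≤ q → ¬ G.Adj (p i) (p i'))
    (hpi : ∀ i i', i < i' → i' ≤ q → p i ≠ p i')
    (x : V) (hx : x ∈ L (s - 1)) (hxa : G.Adj x (p q))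
    (hxn : ∀ i, 1 ≤ i → i < q → ¬ G.Adj x (p i)) :
    ∃ f : ℕ → V, f 0 ∈ L 0 ∧ f (s + q + j) ∈ M 0 ∧
      (∀ i, i < s + q + j → G.Adj (f i) (f (i + 1))) ∧
      (∀ i i', i < i' → i' ≤ s + q + j → f i ≠ f i') ∧
      (∀ i i', i + 2 ≤ i' → i' ≤ s + q + j → ¬ G.Adj (f i) (f i')) ∧
      (∀ i, i ≤ s + q + j → (∃ a ≤ s, f i ∈ L a) ∨ (∃ a ≤ t, f i ∈ M a)) := by
  obtain ⟨l, hl1, hl2, hl3⟩ := level_path G L s hL (s - 1) (by omega) x hx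
  obtain ⟨μ, hμ1, hμ2, hμ3⟩ := level_path G M t hM j hjt (p 0) hp0
  obtain ⟨f, hf⟩ : ∃ f : ℕ → V, f = fun i => if i < s then l i else
    if i < s + q then p (s + q - i) else μ (s + q + j - i) := ⟨_, rfl⟩
  have f1 : ∀ i, i < s → f i = l i := by intro i hi; simp [hf, hi]
  have f2 : ∀ i, 1 ≤ i → i ≤ q → f (s + q - i) = p i := by
    intro i h1 h2
    have e1 : ¬ (s + q - i < s) := by omega
    have e2 : s + q - i < s + q := by omega
    have e3 : s + q - (s + q - i) = i := by omega
    simp only [hf, e1, e2, e3, if_true, if_false]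
  have f3 : ∀ i, i ≤ j → f (s + q + j - i) = μ i := by
    intro i h1
    have e1 : ¬ (s + q + j - i < s) := by omega
    have e2 : ¬ (s + q + j - i < s + q) := by omega
    have e3 : s + q + j - (s + q + j - i) = i := by omega
    simp only [hf, e1, e2, e3, if_false]
  clear hf
  -- classification of indices
  have cls : ∀ i, i ≤ s + q + j → (i < s ∧ f i = l i) ∨
      (∃ a, 1 ≤ a ∧ a ≤ q ∧ i + a = s + q ∧ f i = p a) ∨
      (∃ a, a ≤ j ∧ i + a = s + q + j ∧ f i = μ a) := by
    intro i hi
    rcases Nat.lt_or_ge i s with h | h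
    · exact Or.inl ⟨h, f1 i h⟩
    rcases Nat.lt_or_ge i (s + q) with h' | h'
    · refine Or.inr (Or.inl ⟨s + q - i, by omega, by omega, by omega, ?_⟩)
      rw [← f2 (s + q - i) (by omega) (by omega)]
      congr 1; omega
    · refine Or.inr (Or.inr ⟨s + q + j - i, by omega, by omega, ?_⟩)
      rw [← f3 (s + q + j - i) (by omega)]
      congr 1; omega
  have dL := hL.2.2.1
  have dM := hM.2.2.1
  have aL := hL.2.2.2.2
  have aM := hM.2.2.2.2
  have hpL : ∀ i, 1 ≤ i → i ≤ q → p i ∈ L s := fun i h1 h2 => hD (hpD i h1 h2)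
  have ne_of : ∀ {A B : Finset V} {a b : V}, Disjoint A B → a ∈ A → b ∈ B → a ≠ b := by
    intro A B a b h ha hb hab
    exact Finset.disjoint_left.1 h ha (hab ▸ hb)
  refine ⟨f, ?_, ?_, ?_, ?_, ?_, ?_⟩
  · rw [f1 0 hs]; exact hl2 0 (by omega)
  · have := f3 0 (by omega)
    rw [Nat.sub_zero] at this
    rw [this]; exact hμ2 0 (by omega)
  · intro i hi
    rcases cls i (by omega) with ⟨h1, e1⟩ | ⟨a, h1, h2, h3, e1⟩ | ⟨a, h1, h2, e1⟩ <;>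
    rcases cls (i + 1) (by omega) with ⟨h1', e1'⟩ | ⟨a', h1', h2', h3', e1'⟩ | ⟨a', h1', h2', e1'⟩
    · rw [e1, e1']; exact hl3 i (by omega)
    · have ea : a' = q := by omega
      have ei : i = s - 1 := by omega
      rw [e1, e1', ea, ei, hl1]; exact hxa
    · omega
    · omega
    · have ea : a = a' + 1 := by omega
      rw [e1, e1', ea]; exact (hpa a' (by omega)).symm
    · have ea : a = 0 + 1 := by omega
      have ea' : a' = j := by omega
      rw [e1, e1', ea, ea', hμ1]; exact (hpa 0 (by omega)).symm
    · omega
    · omega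
    · have ea : a = a' + 1 := by omega
      rw [e1, e1', ea]; exact (hμ3 a' (by omega)).symm
  · intro i i' hii hi'
    rcases cls i (by omega) with ⟨h1, e1⟩ | ⟨a, h1, h2, h3, e1⟩ | ⟨a, h1, h2, e1⟩ <;>
    rcases cls i' (by omega) with ⟨h1', e1'⟩ | ⟨a', h1', h2', h3', e1'⟩ | ⟨a', h1', h2', e1'⟩
    · rw [e1, e1']
      exact ne_of (dL i i' hii (by omega)) (hl2 i (by omega)) (hl2 i' (by omega))
    · rw [e1, e1']
      exact ne_of (dL i s h1 le_rfl) (hl2 i (by omega)) (hpL a' h1' h2')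
    · rw [e1, e1']
      exact ne_of (hdisj i a' (by omega) (by omega)) (hl2 i (by omega)) (hμ2 a' h1')
    · omega
    · rw [e1, e1']; exact (hpi a' a (by omega) h2).symm
    · rw [e1, e1']
      exact ne_of (hdisj s a' le_rfl (by omega)) (hpL a h1 h2) (hμ2 a' h1')
    · omega
    · omega
    · rw [e1, e1']
      exact (ne_of (dM a' a (by omega) (by omega)) (hμ2 a' h1') (hμ2 a h1)).symm
  · intro i i' hii hi'
    rcases cls i (by omega) with ⟨h1, e1⟩ | ⟨a, h1, h2, h3, e1⟩ | ⟨a, h1, h2, e1⟩ <;>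
    rcases cls i' (by omega) with ⟨h1', e1'⟩ | ⟨a', h1', h2', h3', e1'⟩ | ⟨a', h1', h2', e1'⟩
    · rw [e1, e1']
      exact aL i' (by omega) (by omega) i (by omega) _ (hl2 i (by omega)) _ (hl2 i' (by omega))
    · rw [e1, e1']
      rcases Nat.lt_or_ge (i + 1) s with h | h
      · exact aL s (by omega) le_rfl i (by omega) _ (hl2 i (by omega)) _ (hpL a' h1' h2')
      · have ei : i = s - 1 := by omega
        rw [ei, hl1]; exact hxn a' h1' (by omega)
    · rw [e1, e1']
      exact hanti i a' h1 (by omega) _ (hl2 i (by omega)) _ (hμ2 a' h1')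
    · omega
    · rw [e1, e1']; exact fun h => hpn a' a (by omega) h2 h.symm
    · rw [e1, e1']
      rcases Nat.lt_or_ge a' j with h | h
      · exact hDM a' h _ (hpD a h1 h2) _ (hμ2 a' h1')
      · have ea' : a' = j := by omega
        rw [ea', hμ1]; exact fun h => hpn 0 a (by omega) h2 h.symm
    · omega
    · omega
    · rw [e1, e1']
      exact fun h => aM a (by omega) (by omega) a' (by omega) _ (hμ2 a' h1') _ (hμ2 a h1) h.symm
  · intro i hi
    rcases cls i hi with ⟨h1, e1⟩ | ⟨a, h1, h2, h3, e1⟩ | ⟨a, h1, h2, e1⟩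
    · left; exact ⟨i, by omega, by rw [e1]; exact hl2 i (by omega)⟩
    · left; exact ⟨s, le_rfl, by rw [e1]; exact hpL a h1 h2⟩
    · right; exact ⟨a, by omega, by rw [e1]; exact hμ2 a h1⟩

lemma core {V : Type} [Fintype V] (G : SimpleGraph V) (s t j q : ℕ) (L M : ℕ → Finset V)
    (η u : ℝ) (hη : 0 < η) (hu : 1 ≤ u) (k : ℕ)
    (hn : (Fintype.card V : ℝ) ≤ u ^ (k + 1))
    (hsp : ∀ (v : V) (A : Finset V), (∀ a ∈ A, G.Adj v a) → (A.card : ℝ) ≤ η)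
    (hco : ∀ A B : Finset V, Disjoint A B → (∀ a ∈ A, ∀ b ∈ B, ¬ G.Adj a b) →
      η / u ≤ (A.card : ℝ) → (B.card : ℝ) < η)
    (hL : IsLevelling G L s) (hM : IsLevelling G M t) (hs : 0 < s) (hjt : j ≤ t) (hq : 1 ≤ q)
    (hdisj : ∀ i i', i ≤ s → i' ≤ t → Disjoint (L i) (M i'))
    (hanti : ∀ i i', i < s → i' ≤ t → ∀ x ∈ L i, ∀ y ∈ M i', ¬ G.Adj x y)
    (D : Finset V) (hD : D ⊆ L s)
    (hDM : ∀ i, i < j → ∀ x ∈ D, ∀ y ∈ M i, ¬ G.Adj x y)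
    (hcov : ∀ x ∈ D, ∃ y ∈ M j, G.Adj y x)
    (hDc : (1 + q * (k + 1)) * ((q + 4) * η) ≤ (D.card : ℝ)) :
    ∃ f : ℕ → V, f 0 ∈ L 0 ∧ f (s + q + j) ∈ M 0 ∧
      (∀ i, i < s + q + j → G.Adj (f i) (f (i + 1))) ∧
      (∀ i i', i < i' → i' ≤ s + q + j → f i ≠ f i') ∧
      (∀ i i', i + 2 ≤ i' → i' ≤ s + q + j → ¬ G.Adj (f i) (f i')) ∧
      (∀ i, i ≤ s + q + j → (∃ a ≤ s, f i ∈ L a) ∨ (∃ a ≤ t, f i ∈ M a)) := by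
  have hq0 : (0 : ℝ) ≤ q := Nat.cast_nonneg q
  have hqe : 0 ≤ q * η := by positivity
  obtain ⟨idx, hi1, hi2, hi3, hi4⟩ := exists_blocks G (L (s - 1)) η ((q + 3) * η) hη
    (by positivity) hsp (1 + q * (k + 1)) D
    (fun d hd => hL.2.2.2.1 s hs le_rfl d (hD hd))
    (by
      push_cast
      refine le_trans (le_of_eq ?_) hDc
      ring)
  have hM0 : ∀ y ∈ M j, idx y = 0 := by
    intro y hy
    by_contra h
    exact Finset.disjoint_left.1 (hdisj s j le_rfl hjt) (hD (hi2 y h)) hy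
  obtain ⟨R, hRc, hR⟩ := hi3 1 le_rfl (by omega)
  obtain ⟨p, hp0, hpF, hpa, hpn, hpi⟩ := grow_path G idx η u hη hu k hn hsp hco q
    (fun v => idx v ≠ 0) 1 (M j) R
    (by
      intro r hr
      have h1 := hR r hr
      refine ⟨h1, ?_⟩
      obtain ⟨y, hy, hyr⟩ := hcov r (hi2 r (by omega))
      refine ⟨y, hy, Relation.ReflTransGen.single ⟨hyr, by omega, ?_⟩⟩
      rw [hM0 y hy, h1]; omega)
    (by nlinarith)
    (by
      intro b' h1 h2
      obtain ⟨S, hS, hS'⟩ := hi3 b' (by omega) h2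
      exact ⟨S, hS, fun s hs => ⟨hS' s hs, by have := hS' s hs; omega⟩⟩)
  obtain ⟨x, hx, hxa, hxn⟩ := hi4 (p q) (hpF q hq le_rfl)
  exact assemble G s t j q L M hL hM hs hjt hq hdisj hanti D hD hDM p hp0
    (fun i h1 h2 => hi2 _ (hpF i h1 h2)) hpa hpn
    (fun i i' h1 h2 h3 => by have := hpi i i' h1 h2; rw [h3] at this; omega) x hx hxa
    (fun i h1 h2 => hxn _ (hpF i h1 h2.le) (hpi i q h2 le_rfl))

lemma numeric (m Q t : ℕ) (hm : 1 ≤ m) (hQ : 2 ≤ Q) (ht : 1 ≤ t) :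
    (t + 1) * ((1 + Q * m) * (Q + 4)) + 1 ≤ (2 + m) ^ ((t + 1) * Q) := by
  have h1 : ∀ Q, 2 ≤ Q → Q + 7 ≤ (2 + m) ^ Q ∧ 2 * (1 + Q * m) ≤ (2 + m) ^ Q := by
    intro Q hQ
    induction Q, hQ using Nat.le_induction with
    | base => constructor <;> nlinarith
    | succ Q hQ ih =>
      obtain ⟨i1, i2⟩ := ih
      rw [pow_succ]
      constructor
      · nlinarith
      · have : 2 * (1 + Q * m) * 3 ≤ (2 + m) ^ Q * (2 + m) := by
          apply Nat.mul_le_mul i2; omega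
        nlinarith
  obtain ⟨i1, i2⟩ := h1 Q hQ
  rw [mul_comm (t + 1) Q, pow_mul]
  set z := (2 + m) ^ Q
  have h2 : (t + 1) * z ^ 2 ≤ 2 * z ^ (t + 1) := by
    induction t, ht using Nat.le_induction with
    | base => norm_num
    | succ t ht ih =>
      have e : z ^ (t + 1 + 1) = z ^ (t + 1) * z := pow_succ _ _
      have : z ^ (t + 1) * 9 ≤ z ^ (t + 1) * z := Nat.mul_le_mul_left _ (by omega)
      have h5 : 1 * z ^ 2 ≤ (t + 1) * z ^ 2 := Nat.mul_le_mul_right _ (by omega)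
      have : (t + 1 + 1) * z ^ 2 = (t + 1) * z ^ 2 + z ^ 2 := by ring
      rw [e, this]
      omega
  have h3 : 2 * (1 + Q * m) * (Q + 7) ≤ z * z := Nat.mul_le_mul i2 i1
  have h4 : (t + 1) * (2 * (1 + Q * m) * (Q + 7)) ≤ (t + 1) * z ^ 2 := by
    rw [sq]; exact Nat.mul_le_mul_left _ h3
  have h6 : 2 * ((t + 1) * ((1 + Q * m) * (Q + 4)) + 1)
      ≤ (t + 1) * (2 * (1 + Q * m) * (Q + 7)) := by
    have e : (t + 1) * (2 * (1 + Q * m) * (Q + 7)) =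
      2 * ((t + 1) * ((1 + Q * m) * (Q + 4))) + 6 * ((t + 1) * (1 + Q * m)) := by ring
    have : 1 ≤ (t + 1) * (1 + Q * m) := Nat.mul_pos (by omega) (by omega)
    omega
  omega

/-- the pathfinder. -/
theorem stmt_13 {V : Type} [Fintype V] [DecidableEq V] (G : SimpleGraph V) [DecidableRel G.Adj]
    (c : ℝ) (hc : 0 < c) (hci : ∃ m : ℕ, (m : ℝ) * c = 1)
    (ℓ s₁ t₁ : ℕ) (hℓ : 0 < ℓ) (hs : 0 < s₁) (ht : 0 < t₁)
    (d ε : ℝ) (hd : 0 < d) (hε0 : 0 < ε)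
    (hεd : (2 + 1 / c) ^ ((t₁ + 1) * (ℓ + t₁)) * ε < d)
    (hsparse : ∀ v : V, (G.degree v : ℝ) < ε * Fintype.card V)
    (hcoherent : ¬ ∃ A B : Finset V, Disjoint A B ∧
      (∀ a ∈ A, ∀ b ∈ B, ¬ G.Adj a b) ∧
      ε * (Fintype.card V : ℝ) ^ (1 - c) ≤ (A.card : ℝ) ∧
      ε * Fintype.card V ≤ (B.card : ℝ))
    (L M : ℕ → Finset V) (hL : IsLevelling G L s₁) (hM : IsLevelling G M t₁)
    (a₁ a₂ : V) (ha₁ : L 0 = {a₁}) (ha₂ : M 0 = {a₂})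
    (hint : ((Finset.range (s₁ + 1)).biUnion L) ∩ ((Finset.range (t₁ + 1)).biUnion M) =
      ({a₁} : Finset V) ∩ {a₂})
    (hanti1 : ∀ x ∈ (Finset.range (t₁ + 1)).biUnion M, x ≠ a₂ →
      ∀ y ∈ (Finset.range s₁).biUnion L, ¬ G.Adj x y)
    (hanti2 : a₁ ≠ a₂ → ∀ y ∈ (Finset.range s₁).biUnion L, ¬ G.Adj a₂ y)
    (hB1 : d * Fintype.card V ≤ ((L s₁).card : ℝ))
    (hB2 : d * Fintype.card V ≤ ((M t₁).card : ℝ)) :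
    ∃ p : G.Walk a₁ a₂, p.length = ℓ + s₁ + t₁ ∧
      (∀ h : a₁ = a₂, (p.copy rfl h.symm).IsCycle) ∧ (a₁ ≠ a₂ → p.IsPath) ∧
      (∀ x ∈ p.support,
        x ∈ ((Finset.range (s₁ + 1)).biUnion L) ∪ ((Finset.range (t₁ + 1)).biUnion M)) ∧
      (∀ x ∈ p.support, ∀ y ∈ p.support, G.Adj x y → s(x, y) ∈ p.edges) := by
  classical
  obtain ⟨m, hmc⟩ := hci
  have hm : 1 ≤ m := by
    rcases Nat.eq_zero_or_pos m with h | h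
    · simp [h] at hmc
    · exact h
  obtain ⟨k, rfl⟩ : ∃ k, m = k + 1 := ⟨m - 1, by omega⟩
  have hc1 : 1 / c = ((k + 1 : ℕ) : ℝ) := by
    rw [div_eq_iff hc.ne']; exact hmc.symm
  have hn0 : (0 : ℝ) < Fintype.card V := by
    exact_mod_cast Fintype.card_pos_iff.2 ⟨a₁⟩
  have hn1 : (1 : ℝ) ≤ Fintype.card V := by
    exact_mod_cast Nat.succ_le_of_lt (Fintype.card_pos_iff.2 ⟨a₁⟩)
  set n : ℝ := (Fintype.card V : ℝ) with hn
  set η : ℝ := ε * n with hηdef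
  have hη : 0 < η := mul_pos hε0 hn0
  set u : ℝ := n ^ c with hudef
  have hu : 1 ≤ u := Real.one_le_rpow hn1 hc.le
  have hu0 : 0 < u := by linarith
  have hun : n ≤ u ^ (k + 1) := by
    rw [hudef, ← Real.rpow_natCast, ← Real.rpow_mul hn0.le, mul_comm, hmc, Real.rpow_one]
  have hpow : ε * n ^ (1 - c) = η / u := by
    rw [Real.rpow_sub hn0, Real.rpow_one, hηdef, hudef]; ring
  have hsp : ∀ (v : V) (A : Finset V), (∀ a ∈ A, G.Adj v a) → (A.card : ℝ) ≤ η := by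
    intro v A hA
    have h1 : A ⊆ G.neighborFinset v := by
      intro a ha; rw [SimpleGraph.mem_neighborFinset]; exact hA a ha
    have h2 : (A.card : ℝ) ≤ G.degree v := by exact_mod_cast Finset.card_le_card h1
    linarith [hsparse v]
  have hco : ∀ A B : Finset V, Disjoint A B → (∀ a ∈ A, ∀ b ∈ B, ¬ G.Adj a b) →
      η / u ≤ (A.card : ℝ) → (B.card : ℝ) < η := by
    intro A B h1 h2 h3
    by_contra h4
    exact hcoherent ⟨A, B, h1, h2, by rw [hpow]; exact h3, not_lt.1 h4⟩
  have memL : ∀ i, i ≤ s₁ → ∀ x ∈ L i, x ∈ (Finset.range (s₁ + 1)).biUnion L := by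
    intro i hi x hx
    exact Finset.mem_biUnion.2 ⟨i, Finset.mem_range.2 (by omega), hx⟩
  have memL' : ∀ i, i < s₁ → ∀ x ∈ L i, x ∈ (Finset.range s₁).biUnion L := by
    intro i hi x hx
    exact Finset.mem_biUnion.2 ⟨i, Finset.mem_range.2 hi, hx⟩
  have memM : ∀ i, i ≤ t₁ → ∀ x ∈ M i, x ∈ (Finset.range (t₁ + 1)).biUnion M := by
    intro i hi x hx
    exact Finset.mem_biUnion.2 ⟨i, Finset.mem_range.2 (by omega), hx⟩
  -- the two apexes are distinct
  have hne : a₁ ≠ a₂ := by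
    intro heq
    have hpos : (0 : ℝ) < (M t₁).card := lt_of_lt_of_le (mul_pos hd hn0) hB2
    have hpos' : 0 < (M t₁).card := by exact_mod_cast hpos
    obtain ⟨v, hv⟩ := Finset.card_pos.1 hpos'
    obtain ⟨l, h1, h2, h3⟩ := level_path G M t₁ hM t₁ le_rfl v hv
    have h4 := h3 0 ht
    have h5 : l 0 = a₂ := by have := h2 0 (by omega); rw [ha₂] at this; simpa using this
    rw [h5] at h4
    refine hanti1 (l (0 + 1)) (memM 1 ht _ (h2 1 ht)) h4.ne' a₂
      (memL' 0 hs a₂ (by rw [ha₁, heq]; simp)) h4.symm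
  have hdisj : ∀ i i', i ≤ s₁ → i' ≤ t₁ → Disjoint (L i) (M i') := by
    intro i i' hi hi'
    rw [Finset.disjoint_left]
    intro x hx hx'
    have h1 := Finset.mem_inter.2 ⟨memL i hi x hx, memM i' hi' x hx'⟩
    rw [hint] at h1
    simp only [Finset.mem_inter, Finset.mem_singleton] at h1
    exact hne (h1.1.symm.trans h1.2)
  have hanti : ∀ i i', i < s₁ → i' ≤ t₁ → ∀ x ∈ L i, ∀ y ∈ M i', ¬ G.Adj x y := by
    intro i i' hi hi' x hx y hy hadj
    by_cases hya : y = a₂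
    · exact hanti2 hne x (memL' i hi x hx) (hya ▸ hadj.symm)
    · exact hanti1 y (memM i' hi' y hy) hya x (memL' i hi x hx) hadj.symm
  set Q := ℓ + t₁ with hQ
  set S : ℝ := (1 + Q * (k + 1)) * ((Q + 4) * η) with hS
  have hnum : (t₁ + 1) * S + η ≤ d * n := by
    have h1 := numeric (k + 1) Q t₁ hm (by omega) ht
    have h2 : ((t₁ : ℝ) + 1) * ((1 + Q * (k + 1)) * (Q + 4)) + 1
        ≤ (2 + (k + 1)) ^ ((t₁ + 1) * Q) := by exact_mod_cast h1
    rw [hc1] at hεd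
    push_cast at hεd
    have h3 : (((t₁ : ℝ) + 1) * ((1 + Q * (k + 1)) * (Q + 4)) + 1) * η ≤
        (2 + ((k : ℝ) + 1)) ^ ((t₁ + 1) * Q) * η := by gcongr
    have h4 : (2 + ((k : ℝ) + 1)) ^ ((t₁ + 1) * Q) * η ≤ d * n := by
      rw [hηdef, ← mul_assoc]
      exact mul_le_mul_of_nonneg_right hεd.le hn0.le
    calc (t₁ + 1) * S + η
        = (((t₁ : ℝ) + 1) * ((1 + Q * (k + 1)) * (Q + 4)) + 1) * η := by rw [hS]; ring
      _ ≤ _ := h3.trans h4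
  -- the existence of a suitable function suffices
  have main : ∃ f : ℕ → V, f 0 ∈ L 0 ∧ f (ℓ + s₁ + t₁) ∈ M 0 ∧
      (∀ i, i < ℓ + s₁ + t₁ → G.Adj (f i) (f (i + 1))) ∧
      (∀ i i', i < i' → i' ≤ ℓ + s₁ + t₁ → f i ≠ f i') ∧
      (∀ i i', i + 2 ≤ i' → i' ≤ ℓ + s₁ + t₁ → ¬ G.Adj (f i) (f i')) ∧
      (∀ i, i ≤ ℓ + s₁ + t₁ → (∃ a ≤ s₁, f i ∈ L a) ∨ (∃ a ≤ t₁, f i ∈ M a)) := by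
    by_contra hno
    have hcore : ∀ j, j ≤ t₁ → ∀ D : Finset V, D ⊆ L s₁ →
        (∀ i, i < j → ∀ x ∈ D, ∀ y ∈ M i, ¬ G.Adj x y) →
        (∀ x ∈ D, ∃ y ∈ M j, G.Adj y x) → (D.card : ℝ) < S := by
      intro j hj D hD hDM hcov
      by_contra hge
      rw [not_lt] at hge
      have := core G s₁ t₁ j (ℓ + t₁ - j) L M η u hη hu k hun hsp hco hL hM hs hj (by omega)
        hdisj hanti D hD hDM hcov (by
          have hqQ : ((ℓ + t₁ - j : ℕ) : ℝ) ≤ Q := by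
            exact_mod_cast (show ℓ + t₁ - j ≤ Q by omega)
          refine le_trans ?_ hge
          rw [hS]
          gcongr)
      rw [show s₁ + (ℓ + t₁ - j) + j = ℓ + s₁ + t₁ by omega] at this
      exact hno this
    have hS0 : 0 ≤ S := by positivity
    have hstep : ∀ j, j ≤ t₁ → ∃ D ⊆ L s₁, d * n - j * S ≤ (D.card : ℝ) ∧
        ∀ i, i < j → ∀ x ∈ D, ∀ y ∈ M i, ¬ G.Adj x y := by
      intro j
      induction j with
      | zero =>
        intro _
        exact ⟨L s₁, Finset.Subset.refl _, by simpa using hB1, by intros; omega⟩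
      | succ j ih =>
        intro hj
        obtain ⟨D, hD, hDc, hDM⟩ := ih (by omega)
        have h1 := hcore j (by omega) (D.filter (fun x => ∃ y ∈ M j, G.Adj y x))
          ((Finset.filter_subset _ _).trans hD)
          (fun i hi x hx => hDM i hi x (Finset.mem_filter.1 hx).1)
          (fun x hx => (Finset.mem_filter.1 hx).2)
        have hsum := Finset.card_filter_add_card_filter_not (s := D)
          (fun x => ∃ y ∈ M j, G.Adj y x)
        have hsum' : ((D.filter (fun x => ∃ y ∈ M j, G.Adj y x)).card : ℝ)
          + (D.filter (fun x => ¬ ∃ y ∈ M j, G.Adj y x)).card = D.card := by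
          exact_mod_cast hsum
        refine ⟨D.filter (fun x => ¬ ∃ y ∈ M j, G.Adj y x),
          (Finset.filter_subset _ _).trans hD, ?_, ?_⟩
        · push_cast; linarith
        · intro i hi x hx y hy hadj
          rw [Finset.mem_filter] at hx
          rcases Nat.lt_or_ge i j with h | h
          · exact hDM i h x hx.1 y hy hadj
          · have : i = j := by omega
            subst this
            exact hx.2 ⟨y, hy, hadj.symm⟩
    obtain ⟨D, hD, hDc, hDM⟩ := hstep t₁ le_rfl
    have h1 := hcore t₁ le_rfl (D.filter (fun x => ∃ y ∈ M t₁, G.Adj y x))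
      ((Finset.filter_subset _ _).trans hD)
      (fun i hi x hx => hDM i hi x (Finset.mem_filter.1 hx).1)
      (fun x hx => (Finset.mem_filter.1 hx).2)
    have h2 := hco (M t₁) (D.filter (fun x => ¬ ∃ y ∈ M t₁, G.Adj y x))
      (by
        rw [Finset.disjoint_left]
        intro x hx hx'
        exact Finset.disjoint_left.1 (hdisj s₁ t₁ le_rfl le_rfl)
          (hD (Finset.mem_filter.1 hx').1) hx)
      (fun a ha b hb hadj => (Finset.mem_filter.1 hb).2 ⟨a, ha, hadj⟩)
      (by
        have h3 : η / u ≤ η := div_le_self hη.le hu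
        have h4 : 0 ≤ ((t₁ : ℝ) + 1) * S := by positivity
        linarith)
    have hsum := Finset.card_filter_add_card_filter_not (s := D)
      (fun x => ∃ y ∈ M t₁, G.Adj y x)
    have hsum' : ((D.filter (fun x => ∃ y ∈ M t₁, G.Adj y x)).card : ℝ)
      + (D.filter (fun x => ¬ ∃ y ∈ M t₁, G.Adj y x)).card = D.card := by
      exact_mod_cast hsum
    linarith
  obtain ⟨f, hf0, hfn, hfa, hfi, hfd, hfm⟩ := main
  obtain ⟨p, hp1, hp2, hp3, hp4⟩ := induced_walk_of_fun G f _ hfa hfi hfd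
  have e0 : f 0 = a₁ := by rw [ha₁] at hf0; simpa using hf0
  have en : f (ℓ + s₁ + t₁) = a₂ := by rw [ha₂] at hfn; simpa using hfn
  refine ⟨p.copy e0 en, by simpa using hp1, fun h => absurd h hne, fun _ => by simpa using hp2,
    ?_, ?_⟩
  · intro x hx
    rw [SimpleGraph.Walk.support_copy] at hx
    obtain ⟨i, hi, rfl⟩ := hp3 x hx
    rw [Finset.mem_union]
    rcases hfm i hi with ⟨a, ha, h⟩ | ⟨a, ha, h⟩
    · exact Or.inl (memL a ha _ h)
    · exact Or.inr (memM a ha _ h)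
  · intro x hx y hy hadj
    rw [SimpleGraph.Walk.support_copy] at hx hy
    rw [SimpleGraph.Walk.edges_copy]
    exact hp4 x hx y hy hadj
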